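/- Let α, β, λ > 0 and let F be the EEP(α,β,λ) cumulative distribution function. Then F(x)/x^α tends to λ β^α/(1 − e^{−λ}) as x tends to 0 from the right; in particular F(x) = O(x^α) as x → 0⁺, so the lower tail of EEP(α,β,λ) behaves like that of the gamma and Weibull distributions. -/

import Mathlib

/-!
The function `t ↦ 1 - exp (-c t)` vanishes at `0` with derivative `c`, so `(1 - exp (-c t)) / t → c`
as `t → 0⁺`. With `u = 1 - exp (-β x)`, which tends to `0` from the right with `x`, the quotient
factors as `(1 - exp (-λ u ^ α)) / u ^ α * (u / x) ^ α / (1 - exp (-λ))`. The limit is applied once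
with `c = λ`, `t = u ^ α` and once with `c = β`, `t = x`.
-/

open Real Set Filter Topology

/-- The EEP(α,β,λ) cumulative distribution function. -/
noncomputable def eepCdf (α β lam : ℝ) (x : ℝ) : ℝ :=
  if 0 ≤ x then
    (1 - Real.exp (-lam * (1 - Real.exp (-β * x)) ^ α)) / (1 - Real.exp (-lam))
  else 0

lemma tendsto_one_sub_exp_div (c : ℝ) :
    Tendsto (fun t : ℝ => (1 - Real.exp (-c * t)) / t) (𝓝[>] 0) (𝓝 c) := by
  have h : HasDerivAt (fun t : ℝ => 1 - Real.exp (-c * t)) c 0 := by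
    simpa using (((hasDerivAt_id (0 : ℝ)).const_mul (-c)).exp).const_sub 1
  have h' := h.tendsto_slope_zero_right
  refine h'.congr fun t => ?_
  simp [div_eq_inv_mul]

theorem eep_cdf_lower_tail (α β lam : ℝ)
    (hα : 0 < α) (hβ : 0 < β) (hlam : 0 < lam) :
    Filter.Tendsto (fun x : ℝ => eepCdf α β lam x / x ^ α)
      (nhdsWithin 0 (Set.Ioi 0))
      (nhds (lam * β ^ α / (1 - Real.exp (-lam)))) := by
  have hu_pos : ∀ x : ℝ, 0 < x → 0 < 1 - Real.exp (-β * x) := fun x hx => by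
    have : Real.exp (-β * x) < 1 := by
      rw [← Real.exp_zero]; exact Real.exp_lt_exp.2 (by nlinarith [mul_pos hβ hx])
    linarith
  have hu : Tendsto (fun x : ℝ => (1 - Real.exp (-β * x)) ^ α) (𝓝[>] 0) (𝓝[>] 0) := by
    refine tendsto_nhdsWithin_iff.2 ⟨?_, ?_⟩
    · have hc : Continuous fun x : ℝ => (1 - Real.exp (-β * x)) ^ α :=
        Continuous.rpow_const (by fun_prop) fun _ => Or.inr hα.le
      have h0 := (hc.tendsto 0).mono_left (nhdsWithin_le_nhds (s := Ioi 0))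
      simpa [Real.zero_rpow hα.ne'] using h0
    · filter_upwards [self_mem_nhdsWithin] with x hx
      exact Real.rpow_pos_of_pos (hu_pos x hx) α
  have h₁ := (tendsto_one_sub_exp_div lam).comp hu
  have h₂ := (tendsto_one_sub_exp_div β).rpow_const (p := α) (Or.inr hα.le)
  refine ((h₁.mul h₂).div_const (1 - Real.exp (-lam))).congr' ?_
  filter_upwards [self_mem_nhdsWithin] with x hx
  have hx : 0 < x := hx
  have hv := (Real.rpow_pos_of_pos (hu_pos x hx) α).ne'
  simp only [Function.comp_apply, eepCdf, if_pos hx.le]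
  rw [Real.div_rpow (hu_pos x hx).le hx.le, div_mul_div_cancel₀ hv, div_right_comm]
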